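/- For general points, if 5d ≥ 20n + 6 and n ≥ 1, then ℓ(L(d, d−4, 6^n)) ≥ 5d − 20n − 6, with equality whenever n is odd or d ≠ 4n + 2. Since v(L(d, d−4, 6^n)) = 5d − 21n − 6, this system is special. -/

import Mathlib

open MvPolynomial

/-- The iterated partial derivative corresponding to the multi-index `ν`. -/
noncomputable def mderiv (ν : Fin 3 → ℕ) :
    MvPolynomial (Fin 3) ℂ →ₗ[ℂ] MvPolynomial (Fin 3) ℂ :=
  ((pderiv (R := ℂ) (0 : Fin 3)).toLinearMap ^ ν 0) ∘ₗ
  ((pderiv (R := ℂ) (1 : Fin 3)).toLinearMap ^ ν 1) ∘ₗ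
  ((pderiv (R := ℂ) (2 : Fin 3)).toLinearMap ^ ν 2)

/-- The linear system `L(d; m)` of homogeneous forms of degree `d` in three variables
all of whose partial derivatives of order `< m i` vanish at the point `p i`,
i.e. plane curves of degree `d` with multiplicity at least `m i` at `p i`. -/
noncomputable def linSys {k : ℕ} (p : Fin k → Fin 3 → ℂ) (d : ℕ) (m : Fin k → ℕ) :
    Submodule ℂ (MvPolynomial (Fin 3) ℂ) :=
  (homogeneousSubmodule (Fin 3) ℂ d) ⊓
    ⨅ (i : Fin k), ⨅ (ν : Fin 3 → ℕ), ⨅ (_ : ν 0 + ν 1 + ν 2 < m i),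
      LinearMap.ker ((aeval (p i)).toLinearMap ∘ₗ mderiv ν)

/-- The projective dimension `ℓ` of the linear system (`-1` means empty). -/
noncomputable def projDim {k : ℕ} (p : Fin k → Fin 3 → ℂ) (d : ℕ) (m : Fin k → ℕ) : ℤ :=
  (Module.finrank ℂ (linSys p d m) : ℤ) - 1

/-- The virtual dimension `v = d(d+3)/2 - ∑ mᵢ(mᵢ+1)/2`. -/
def virtDim {k : ℕ} (d : ℕ) (m : Fin k → ℕ) : ℤ :=
  ((d : ℤ) * (d + 3)) / 2 - ∑ i : Fin k, ((m i : ℤ) * (m i + 1)) / 2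

/-- The quasi-homogeneous multiplicity vector `(m₀, 6, …, 6)` on `n + 1` points. -/
def qh (n m0 : ℕ) : Fin (n + 1) → ℕ := fun i => if i = 0 then m0 else 6

/-- A property `Q` of configurations of `k` points of `ℙ²` (given by nonzero homogeneous
coordinate vectors) holds for points in general position: there is a nonzero polynomial
in the coordinates such that `Q` holds whenever it does not vanish. -/
def Generically (k : ℕ) (Q : (Fin k → Fin 3 → ℂ) → Prop) : Prop :=
  ∃ P : MvPolynomial (Fin k × Fin 3) ℂ, P ≠ 0 ∧
    ∀ p : Fin k → Fin 3 → ℂ, (∀ i, p i ≠ 0) →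
      eval (fun x => p x.1 x.2) P ≠ 0 → Q p

/-!
A form of degree `d` with multiplicity `d - 4` at `p 0` has degree at most `4` along the lines
through `p 0`. Hence the terms of order `5` of its Taylor expansion at any other point vanish at
`p 0`, and a sixfold point imposes at most `20` further conditions instead of `21`, so that
`ℓ ≥ v + n`.

By semicontinuity, the upper bound has to be checked for a single configuration only. Write
`n = a + k` and take `(0 : 0 : 1)` together with the points `(1 : α : -α ^ k)` for `α ^ n = 1`. The
substitution `Z = (T - Y ^ k) / (1 - Y ^ a T)` contracts the line `Y = α` to `Z = -α ^ k`, and so it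
turns multiplicity `6` at `(1 : α : -α ^ k)` into divisibility by `(Y - α) ^ 6`. Clearing
denominators, the forms in question become polynomials of degree at most `4` in `T`, whose five
coefficients are multiples of `(Y ^ n - 1) ^ 6` in `ℂ[Y]` of bounded degree; counting these gives
the bound when `a` and `k` are as equal as possible.
-/

open scoped Polynomial

section LinearAlgebra

variable {K V W ι : Type*} [Field K] [AddCommGroup V] [Module K V] [AddCommGroup W] [Module K W]

theorem finrank_le_finrank_iInf_ker_add_sum [Module.Finite K V] [Fintype ι]
    (f : ι → V →ₗ[K] W) (S : ι → Submodule K W) [∀ i, Module.Finite K (S i)]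
    (hf : ∀ i x, f i x ∈ S i) :
    Module.finrank K V ≤
      Module.finrank K (⨅ i, LinearMap.ker (f i) : Submodule K V) +
        ∑ i, Module.finrank K (S i) := by
  let g : V →ₗ[K] ∀ i, S i := LinearMap.pi fun i => (f i).codRestrict (S i) (hf i)
  have hker : LinearMap.ker g = ⨅ i, LinearMap.ker (f i) := by
    simp only [g, LinearMap.ker_pi, LinearMap.ker_codRestrict]
  rw [← g.finrank_range_add_finrank_ker, hker, add_comm, ← Module.finrank_pi_fintype K]
  exact Nat.add_le_add_left (Submodule.finrank_le _) _

end LinearAlgebra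

section MatrixRank

variable {K m n : Type*} [Field K] [Finite m] [Fintype n]

theorem exists_linearIndependent_row_submatrix (A : Matrix m n K) {s : ℕ} (hs : A.rank = s) :
    ∃ r : Fin s → m, LinearIndependent K (A.submatrix r id).row := by
  have := Fintype.ofFinite m
  subst hs
  rw [A.rank_eq_finrank_span_row]
  obtain ⟨f, hf, -, hli⟩ := Submodule.exists_fun_fin_finrank_span_eq K (Set.range A.row)
  choose r hr using hf
  exact ⟨r, (funext hr : (A.submatrix r id).row = f) ▸ hli⟩

theorem exists_det_submatrix_ne_zero (A : Matrix m n K) :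
    ∃ (r : Fin A.rank → m) (c : Fin A.rank → n), (A.submatrix r c).det ≠ 0 := by
  obtain ⟨r, hr⟩ := exists_linearIndependent_row_submatrix A rfl
  have hrank : (A.submatrix r id).transpose.rank = A.rank := by
    rw [Matrix.rank_transpose, hr.rank_matrix, Fintype.card_fin]
  obtain ⟨c, hc⟩ := exists_linearIndependent_row_submatrix _ hrank
  refine ⟨r, c, ?_⟩
  rw [← Matrix.det_transpose]
  exact ((Matrix.isUnit_iff_isUnit_det _).mp
    (Matrix.linearIndependent_rows_iff_isUnit.mp hc)).ne_zero

theorem exists_eval_ne_zero_forall_rank_le {τ : Type*} (M : Matrix m n (MvPolynomial τ K))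
    (x₀ : τ → K) :
    ∃ P : MvPolynomial τ K, eval x₀ P ≠ 0 ∧
      ∀ x, eval x P ≠ 0 → (M.map (eval x₀)).rank ≤ (M.map (eval x)).rank := by
  obtain ⟨r, c, hdet⟩ := exists_det_submatrix_ne_zero (M.map (eval x₀))
  have heval (x : τ → K) :
      eval x (M.submatrix r c).det = ((M.map (eval x)).submatrix r c).det := by
    rw [RingHom.map_det]
    rfl
  refine ⟨(M.submatrix r c).det, by rwa [heval], fun x hx => ?_⟩
  rw [heval] at hx
  simpa [Matrix.rank_of_det_ne_zero hx] using (M.map (eval x)).rank_submatrix_le r c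

end MatrixRank

section Taylor

variable {σ K R S : Type*}

section CommSemiring

variable [CommSemiring K] [CommSemiring R] [Algebra K R] [CommSemiring S] [Algebra K S]
  [Algebra R S] [IsScalarTower K R S]

/-- The Taylor expansion `F(q + X)` of a polynomial `F` at a point `q` with coordinates in an
algebra over the base ring. -/
noncomputable def taylorAt (q : σ → R) : MvPolynomial σ K →ₐ[K] MvPolynomial σ R :=
  aeval fun i => X i + C (q i)

theorem taylorAt_X (q : σ → R) (i : σ) :
    taylorAt q (X i : MvPolynomial σ K) = X i + C (q i) :=
  aeval_X _ i

theorem aeval_taylorAt (q : σ → R) (u : σ → S) (F : MvPolynomial σ K) :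
    aeval u (taylorAt q F) = aeval (fun i => u i + algebraMap R S (q i)) F := by
  have h : ((aeval u).restrictScalars K).comp (taylorAt q) =
      aeval (R := K) fun i => u i + algebraMap R S (q i) := by
    ext i
    simp [taylorAt_X]
  exact DFunLike.congr_fun h F

theorem coeff_zero_taylorAt (q : σ → R) (F : MvPolynomial σ K) :
    coeff 0 (taylorAt q F) = aeval q F := by
  rw [← constantCoeff_eq]
  simpa using aeval_taylorAt q (0 : σ → R) F

theorem pderiv_taylorAt (q : σ → R) (i : σ) (F : MvPolynomial σ K) :
    pderiv i (taylorAt q F) = taylorAt q (pderiv i F) := by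
  induction F using MvPolynomial.induction_on with
  | C a =>
    rw [pderiv_C, map_zero, taylorAt, aeval_C, IsScalarTower.algebraMap_apply K R,
      MvPolynomial.algebraMap_eq, pderiv_C]
  | add F G hF hG => simp only [map_add, hF, hG]
  | mul_X F j hF =>
    rcases eq_or_ne j i with rfl | hj
    · simp [hF, taylorAt_X]
    · simp [hF, taylorAt_X, pderiv_X_of_ne hj]

theorem coeff_taylorAt_pderiv (q : σ → R) (i : σ) (F : MvPolynomial σ K) (ν : σ →₀ ℕ) :
    coeff ν (taylorAt q (pderiv i F)) =
      coeff (ν + Finsupp.single i 1) (taylorAt q F) * (ν i + 1) := by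
  rw [← pderiv_taylorAt, coeff_pderiv]

end CommSemiring

theorem exists_add_single_eq_of_degree_eq_succ {ν : σ →₀ ℕ} {k : ℕ} (h : ν.degree = k + 1) :
    ∃ (μ : σ →₀ ℕ) (i : σ), μ + Finsupp.single i 1 = ν ∧ μ.degree = k := by
  obtain ⟨i, hi⟩ : ∃ i, ν i ≠ 0 := by
    by_contra! h0
    simp [(Finsupp.ext h0 : ν = 0)] at h
  have hμ := Finsupp.sub_add_single_one_cancel hi
  refine ⟨_, i, hμ, ?_⟩
  rw [← hμ, map_add, Finsupp.degree_single] at h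
  exact Nat.succ_injective h

theorem aeval_smul_of_isHomogeneous [CommSemiring K] [CommSemiring R] [Algebra K R] {d : ℕ}
    {F : MvPolynomial σ K} (hF : F.IsHomogeneous d) (w : R) (p : σ → R) :
    aeval (w • p) F = w ^ d * aeval p F := by
  simp only [aeval_def, eval₂_eq, Finset.mul_sum]
  refine Finset.sum_congr rfl fun ν hν => ?_
  have hdeg : ν.degree = d := not_imp_comm.mp hF.coeff_eq_zero (mem_support_iff.mp hν)
  simp only [Pi.smul_apply, smul_eq_mul, mul_pow, Finset.prod_mul_distrib,
    Finset.prod_pow_eq_pow_sum]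
  rw [← Finsupp.degree_apply, hdeg, mul_left_comm]

section CharZero

variable [Field K] [CharZero K] [CommRing R] [Algebra K R]

/-- The polynomial `F` vanishes to order at least `m` at `p`, that is, its Taylor expansion at `p`
has no terms of degree less than `m`. -/
def VanishesToOrder (F : MvPolynomial σ K) (m : ℕ) (p : σ → K) : Prop :=
  ∀ ν : σ →₀ ℕ, ν.degree < m → coeff ν (taylorAt p F) = 0

theorem vanishesToOrder_succ {F : MvPolynomial σ K} {m : ℕ} {p : σ → K} :
    VanishesToOrder F (m + 1) p ↔
      aeval p F = 0 ∧ ∀ i, VanishesToOrder (pderiv i F) m p := by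
  refine ⟨fun h => ⟨?_, fun i ν hν => ?_⟩, fun ⟨h0, h⟩ ν hν => ?_⟩
  · rw [← coeff_zero_taylorAt, h 0 (by simp)]
  · rw [coeff_taylorAt_pderiv, h _ (by simpa using hν), zero_mul]
  · rcases hk : ν.degree with _ | k
    · rw [(Finsupp.degree_eq_zero_iff ν).mp hk, coeff_zero_taylorAt, h0]
    · obtain ⟨μ, i, rfl, rfl⟩ := exists_add_single_eq_of_degree_eq_succ hk
      have hμ := h i μ (by omega)
      rw [coeff_taylorAt_pderiv] at hμ
      exact (mul_eq_zero.mp hμ).resolve_right (Nat.cast_add_one_ne_zero _)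

theorem VanishesToOrder.of_degree_eq [Finite σ] {F : MvPolynomial σ K} {d k : ℕ} {p : σ → K}
    (hF : F.IsHomogeneous d) (hk : k ≤ d)
    (h : ∀ ν : σ →₀ ℕ, ν.degree = k → coeff ν (taylorAt p F) = 0) :
    VanishesToOrder F (k + 1) p := by
  have := Fintype.ofFinite σ
  induction k generalizing F d with
  | zero => exact fun ν hν => h ν (Nat.lt_one_iff.mp hν)
  | succ k ih =>
    have hpderiv (i : σ) : VanishesToOrder (pderiv i F) (k + 1) p :=
      ih hF.pderiv (by omega) fun ν hν => by
        rw [coeff_taylorAt_pderiv, h _ (by simp [hν]), zero_mul]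
    refine vanishesToOrder_succ.mpr ⟨?_, hpderiv⟩
    have euler := congrArg (aeval p) hF.sum_X_mul_pderiv
    rw [map_sum, map_nsmul, Finset.sum_eq_zero, eq_comm, nsmul_eq_mul, mul_eq_zero,
      Nat.cast_eq_zero] at euler
    · exact euler.resolve_left (by omega)
    · intro i _
      rw [map_mul, (vanishesToOrder_succ.mp (hpderiv i)).1, mul_zero]

theorem coeff_taylorAt_smul {F : MvPolynomial σ K} {d : ℕ} (hF : F.IsHomogeneous d) (w : R)
    (p : σ → K) (ν : σ →₀ ℕ) :
    coeff ν (taylorAt (w • (algebraMap K R ∘ p)) F) =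
      w ^ (d - ν.degree) * algebraMap K R (coeff ν (taylorAt p F)) := by
  induction hk : ν.degree generalizing F d ν with
  | zero =>
    obtain rfl := (Finsupp.degree_eq_zero_iff ν).mp hk
    rw [coeff_zero_taylorAt, coeff_zero_taylorAt, aeval_smul_of_isHomogeneous hF, Nat.sub_zero,
      aeval_algebraMap_apply]
  | succ k ih =>
    obtain ⟨μ, i, rfl, hμ⟩ := exists_add_single_eq_of_degree_eq_succ hk
    have hunit : IsUnit ((μ i : R) + 1) := by
      simpa using (IsUnit.mk0 _ (Nat.cast_add_one_ne_zero (R := K) (μ i))).map (algebraMap K R)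
    apply hunit.mul_right_cancel
    calc coeff (μ + Finsupp.single i 1) (taylorAt (w • (algebraMap K R ∘ p)) F) * ((μ i : R) + 1)
      _ = w ^ (d - 1 - k) * algebraMap K R (coeff μ (taylorAt p (pderiv i F))) := by
        rw [← coeff_taylorAt_pderiv, ih hF.pderiv μ hμ]
      _ = _ := by
        rw [coeff_taylorAt_pderiv, map_mul, map_add, map_natCast, map_one, Nat.sub_sub,
          add_comm 1, mul_assoc]

theorem VanishesToOrder.aeval_mem_pow {F : MvPolynomial σ K} {d m : ℕ} {p : σ → K}
    (h : VanishesToOrder F m p) (hF : F.IsHomogeneous d) {I : Ideal R} {x : σ → R} {w : R}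
    (hx : ∀ i, x i - w * algebraMap K R (p i) ∈ I) : aeval x F ∈ I ^ m := by
  let q : σ → R := w • (algebraMap K R ∘ p)
  have htaylor : taylorAt q F ∈ idealOfVars σ R ^ m :=
    (mem_pow_idealOfVars_iff' _ _).mpr fun ν hν => by
      rw [coeff_taylorAt_smul hF, h ν hν, map_zero, mul_zero]
  have hmap : (idealOfVars σ R).map (aeval (R := R) (x - q)) ≤ I := by
    rw [Ideal.map_span, Ideal.span_le]
    rintro _ ⟨_, ⟨i, rfl⟩, rfl⟩
    simpa [q] using hx i
  have hmem := Ideal.pow_right_mono hmap m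
    (Ideal.map_pow (aeval (R := R) (x - q)) _ m ▸ Ideal.mem_map_of_mem _ htaylor)
  simpa [aeval_taylorAt] using hmem

end CharZero

section Line

theorem coeff_aeval_X_mul_C [CommSemiring R] (p : σ → R) (G : MvPolynomial σ R) (k : ℕ) :
    (aeval (fun i => Polynomial.X * Polynomial.C (p i)) G).coeff k =
      eval p (homogeneousComponent k G) := by
  rw [homogeneousComponent_apply, map_sum, Finset.sum_filter, aeval_def, eval₂_eq,
    Polynomial.finsetSum_coeff]
  refine Finset.sum_congr rfl fun ν _ => ?_
  simp only [mul_pow, Finset.prod_mul_distrib, Finset.prod_pow_eq_pow_sum, ← Finsupp.degree_apply,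
    ← Polynomial.C_pow, ← map_prod, Polynomial.algebraMap_eq, Polynomial.coeff_C_mul,
    Polynomial.coeff_X_pow_mul', Polynomial.coeff_C, eval_monomial, Finsupp.prod]
  split_ifs <;> first | omega | simp

variable [Field K] [CharZero K] [CommRing R] [Algebra K R]

theorem VanishesToOrder.natDegree_aeval_line_le {F : MvPolynomial σ K} {d m : ℕ} {p : σ → K}
    (h : VanishesToOrder F m p) (hF : F.IsHomogeneous d) (q : σ → R) :
    (aeval (fun i => Polynomial.X * Polynomial.C (algebraMap K R (p i)) + Polynomial.C (q i))
      F).natDegree ≤ d - m := by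
  let P : σ → R[X] := (Polynomial.X : R[X]) • (algebraMap K (R[X]) ∘ p)
  have htaylor : aeval (fun i => Polynomial.X * Polynomial.C (algebraMap K R (p i)) +
      Polynomial.C (q i)) F = aeval (fun i => Polynomial.C (q i)) (taylorAt P F) := by
    rw [aeval_taylorAt]
    exact congrArg (aeval · F) (funext fun i => add_comm _ _)
  rw [htaylor, aeval_def, eval₂_eq]
  refine Polynomial.natDegree_sum_le_of_forall_le _ _ fun ν _ => ?_
  rcases lt_or_ge ν.degree m with hν | hν
  · simp [P, coeff_taylorAt_smul hF, h ν hν]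
  · simp only [P, coeff_taylorAt_smul hF, ← Polynomial.C_pow, ← map_prod,
      IsScalarTower.algebraMap_apply K R (R[X]), Polynomial.algebraMap_eq,
      Algebra.algebraMap_self, RingHom.id_apply]
    calc _ ≤ _ := Polynomial.natDegree_mul_C_le _ _
      _ ≤ _ := Polynomial.natDegree_mul_C_le _ _
      _ ≤ d - ν.degree := Polynomial.natDegree_X_pow_le _
      _ ≤ d - m := Nat.sub_le_sub_left hν d

theorem VanishesToOrder.eval_homogeneousComponent_taylorAt {F : MvPolynomial σ K}
    {d m k : ℕ} {p : σ → K} (h : VanishesToOrder F m p) (hF : F.IsHomogeneous d)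
    (hk : d - m < k) (q : σ → K) :
    eval p (homogeneousComponent k (taylorAt q F)) = 0 := by
  rw [← coeff_aeval_X_mul_C, aeval_taylorAt]
  exact Polynomial.coeff_eq_zero_of_natDegree_lt
    ((h.natDegree_aeval_line_le hF q).trans_lt hk)

end Line

end Taylor

section LinearSystem

theorem pderiv_commute {σ R : Type*} [CommSemiring R] (i j : σ) :
    Function.Commute (pderiv (R := R) i) (pderiv j) := by
  intro F
  ext μ
  rcases eq_or_ne i j with rfl | h
  · rfl
  · simp only [coeff_pderiv, Finsupp.add_apply, Finsupp.single_eq_of_ne h,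
      Finsupp.single_eq_of_ne h.symm, add_right_comm μ, add_zero]
    ring

theorem mderiv_add_single (ν : Fin 3 → ℕ) (i : Fin 3) (F : MvPolynomial (Fin 3) ℂ) :
    mderiv (ν + Pi.single i 1) F = mderiv ν (pderiv i F) := by
  have hcomm (j k : Fin 3) (a : ℕ) (G : MvPolynomial (Fin 3) ℂ) :
      (pderiv k)^[a] (pderiv j G) = pderiv j ((pderiv k)^[a] G) :=
    ((pderiv_commute j k).iterate_right a G).symm
  simp only [mderiv, LinearMap.comp_apply, Module.End.pow_apply, Derivation.coeFn_coe]
  fin_cases i <;> simp [hcomm]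

theorem vanishesToOrder_iff_mderiv {F : MvPolynomial (Fin 3) ℂ} {m : ℕ} {p : Fin 3 → ℂ} :
    VanishesToOrder F m p ↔
      ∀ ν : Fin 3 → ℕ, ν 0 + ν 1 + ν 2 < m → aeval p (mderiv ν F) = 0 := by
  induction m generalizing F with
  | zero => simp [VanishesToOrder]
  | succ m ih =>
    simp only [vanishesToOrder_succ, ih, ← mderiv_add_single]
    refine ⟨fun ⟨h0, h⟩ ν hν => ?_, fun h => ⟨h 0 (by simp), fun i ν hν => h _ ?_⟩⟩
    · by_cases hi : ∃ i, ν i ≠ 0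
      · obtain ⟨i, hi⟩ := hi
        have hsub : ν - Pi.single i 1 + Pi.single i 1 = ν :=
          tsub_add_cancel_of_le (update_le_iff.mpr ⟨Nat.one_le_iff_ne_zero.mpr hi, by simp⟩)
        rw [← hsub] at hν ⊢
        refine h i _ ?_
        fin_cases i <;> simp at hν ⊢ <;> omega
      · push Not at hi
        rwa [funext hi]
    · fin_cases i <;> simp <;> omega

theorem mem_linSys {k : ℕ} {p : Fin k → Fin 3 → ℂ} {d : ℕ} {m : Fin k → ℕ}
    {F : MvPolynomial (Fin 3) ℂ} :
    F ∈ linSys p d m ↔ F.IsHomogeneous d ∧ ∀ i, VanishesToOrder F (m i) (p i) := by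
  simp [linSys, vanishesToOrder_iff_mderiv, Submodule.mem_iInf]

end LinearSystem

section HomogeneousForms

variable {σ K : Type*} [Field K]

instance finite_homogeneousSubmodule [Finite σ] (d : ℕ) :
    Module.Finite K (homogeneousSubmodule σ K d) :=
  Module.Finite.iff_fg.mpr (homogeneousSubmodule_fg (σ := σ) (R := K) d)

theorem finrank_homogeneousSubmodule [Fintype σ] (d : ℕ) :
    Module.finrank K (homogeneousSubmodule σ K d) = (Fintype.card σ).multichoose d := by
  classical
  have hexp : {ν : σ →₀ ℕ | ν.degree = d} =
      (Finset.finsuppAntidiag (Finset.univ : Finset σ) d : Set (σ →₀ ℕ)) := by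
    ext ν
    simp [Finset.mem_finsuppAntidiag, Finsupp.degree_eq_sum]
  rw [homogeneousSubmodule_eq_finsupp_supported, hexp,
    (AddMonoidAlgebra.supportedEquivFinsupp (R := K) (S := K) _).finrank_eq,
    Module.finrank_finsupp_self]
  simp [Finset.card_finsuppAntidiag_nat_eq_multichoose]

theorem finrank_homogeneousSubmodule_inf_ker_aeval_lt [Finite σ] (k : ℕ) {p : σ → K}
    (hp : p ≠ 0) :
    Module.finrank K (homogeneousSubmodule σ K k ⊓ LinearMap.ker (aeval p).toLinearMap :
      Submodule K (MvPolynomial σ K)) < Module.finrank K (homogeneousSubmodule σ K k) := by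
  obtain ⟨c, hc⟩ := Function.ne_iff.mp hp
  refine Submodule.finrank_lt_finrank_of_lt (inf_le_left.lt_of_ne fun h => ?_)
  have hX : (X c : MvPolynomial σ K) ^ k ∈ homogeneousSubmodule σ K k := by
    simpa using (isHomogeneous_X K c).pow k
  exact pow_ne_zero k hc (by simpa using (inf_eq_left.mp h hX))

end HomogeneousForms

section LowerBound

theorem finrank_homogeneousSubmodule_fin_three (K : Type*) [Field K] (d : ℕ) :
    Module.finrank K (homogeneousSubmodule (Fin 3) K d) = (d + 2).choose 2 := by
  rw [finrank_homogeneousSubmodule, Fintype.card_fin, Nat.multichoose_eq,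
    show 3 + d - 1 = d + 2 by omega, Nat.choose_symm_add]

theorem finrank_le_finrank_inf_linSys_add_sum {k d : ℕ} {r : Fin k → ℕ}
    {U : Submodule ℂ (MvPolynomial (Fin 3) ℂ)} (hU : U ≤ homogeneousSubmodule (Fin 3) ℂ d)
    (hr : ∀ i, r i ≤ d) (p : Fin k → Fin 3 → ℂ)
    (S : Fin k → Submodule ℂ (MvPolynomial (Fin 3) ℂ)) [∀ i, Module.Finite ℂ (S i)]
    (hS : ∀ i, ∀ F ∈ U, homogeneousComponent (r i) (taylorAt (p i) F) ∈ S i) :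
    Module.finrank ℂ U ≤
      Module.finrank ℂ (U ⊓ linSys p d fun i => r i + 1 :
        Submodule ℂ (MvPolynomial (Fin 3) ℂ)) + ∑ i, Module.finrank ℂ (S i) := by
  have hfinite : Module.Finite ℂ U := Submodule.finiteDimensional_of_le hU
  let f (i : Fin k) : U →ₗ[ℂ] MvPolynomial (Fin 3) ℂ :=
    (homogeneousComponent (r i) ∘ₗ (taylorAt (p i)).toLinearMap).domRestrict U
  have hker : (⨅ i, LinearMap.ker (f i)).map U.subtype ≤ U ⊓ linSys p d fun i => r i + 1 := by
    rintro _ ⟨⟨F, hFU⟩, hF, rfl⟩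
    refine ⟨hFU, mem_linSys.mpr ⟨hU hFU, fun i => .of_degree_eq (hU hFU) (hr i) ?_⟩⟩
    intro ν hν
    have hcoeff := congrArg (coeff ν) ((Submodule.mem_iInf _).mp hF i)
    simpa [f, coeff_homogeneousComponent, hν] using hcoeff
  refine (finrank_le_finrank_iInf_ker_add_sum f S fun i F => hS i F F.2).trans
    (Nat.add_le_add_right ?_ _)
  rw [← Submodule.finrank_map_subtype_eq]
  exact Submodule.finrank_mono hker

theorem linSys_inf_linSys_succ {n d : ℕ} (p : Fin (n + 1) → Fin 3 → ℂ) (m : Fin (n + 1) → ℕ) :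
    (linSys (fun _ : Fin 1 => p 0) d fun _ => m 0) ⊓
      (linSys (fun i : Fin n => p i.succ) d fun i => m i.succ) = linSys p d m := by
  ext F
  simp only [Submodule.mem_inf, mem_linSys, Fin.forall_fin_succ]
  tauto

-- The terms of order `r i` at the `i`-th point vanish at `p 0` because the multiplicity there is
-- so large; this makes one of the conditions imposed by each of the points `p 1, …, p n` redundant.
theorem choose_add_le_finrank_linSys {n d : ℕ} {p : Fin (n + 1) → Fin 3 → ℂ}
    {r : Fin (n + 1) → ℕ} (hp : p 0 ≠ 0) (hr : ∀ i, r i < d)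
    (h : ∀ i : Fin n, d ≤ r 0 + r i.succ) :
    (d + 2).choose 2 + n ≤
      Module.finrank ℂ (linSys p d fun i => r i + 1) + ∑ i, (r i + 2).choose 2 := by
  let U := linSys (fun _ : Fin 1 => p 0) d fun _ => r 0 + 1
  let S (i : Fin n) : Submodule ℂ (MvPolynomial (Fin 3) ℂ) :=
    homogeneousSubmodule (Fin 3) ℂ (r i.succ) ⊓ LinearMap.ker (aeval (p 0)).toLinearMap
  have hfinite (i : Fin n) : Module.Finite ℂ (S i) :=
    Submodule.finiteDimensional_of_le inf_le_left
  have hfirst : (d + 2).choose 2 ≤ Module.finrank ℂ U + (r 0 + 2).choose 2 := by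
    have hU : homogeneousSubmodule (Fin 3) ℂ d ⊓ U = U := inf_eq_right.mpr inf_le_left
    have hcond := finrank_le_finrank_inf_linSys_add_sum le_rfl (fun _ => (hr 0).le)
      (fun _ : Fin 1 => p 0) (fun _ => homogeneousSubmodule (Fin 3) ℂ (r 0))
      fun _ F _ => homogeneousComponent_mem _ _
    rwa [hU, Fin.sum_univ_one, finrank_homogeneousSubmodule_fin_three,
      finrank_homogeneousSubmodule_fin_three] at hcond
  have hrest : Module.finrank ℂ U ≤ Module.finrank ℂ (linSys p d fun i => r i + 1) +
      ∑ i, Module.finrank ℂ (S i) := by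
    rw [← linSys_inf_linSys_succ]
    refine finrank_le_finrank_inf_linSys_add_sum inf_le_left (fun i => (hr i.succ).le)
      (fun i => p i.succ) S fun i F hF => ⟨homogeneousComponent_mem _ _, ?_⟩
    obtain ⟨hFhom, hF⟩ := mem_linSys.mp hF
    have hi := h i
    have h0 := hr 0
    simpa using (hF 0).eval_homogeneousComponent_taylorAt hFhom (k := r i.succ) (by omega)
      (p i.succ)
  have hsum : ∑ i, Module.finrank ℂ (S i) + n ≤ ∑ i : Fin n, (r i.succ + 2).choose 2 := by
    calc _ = ∑ i, (Module.finrank ℂ (S i) + 1) := by simp [Finset.sum_add_distrib]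
      _ ≤ _ := Finset.sum_le_sum fun i _ =>
        (finrank_homogeneousSubmodule_inf_ker_aeval_lt (r i.succ) hp).trans_eq
          (finrank_homogeneousSubmodule_fin_three ℂ _)
  rw [Fin.sum_univ_succ]
  omega

theorem choose_two_eq_ediv (k : ℕ) : ((k + 1).choose 2 : ℤ) = (k : ℤ) * (k + 1) / 2 := by
  rw [Nat.choose_two_right, Nat.add_sub_cancel, mul_comm]
  norm_cast

theorem virtDim_add_le_projDim {n d : ℕ} {p : Fin (n + 1) → Fin 3 → ℂ} {m : Fin (n + 1) → ℕ}
    (hp : p 0 ≠ 0) (hm : ∀ i, m i ∈ Set.Icc 1 d) (h : ∀ i : Fin n, d + 2 ≤ m 0 + m i.succ) :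
    virtDim d m + n ≤ projDim p d m := by
  obtain ⟨r, rfl⟩ : ∃ r : Fin (n + 1) → ℕ, m = fun i => r i + 1 :=
    ⟨fun i => m i - 1, funext fun i => (Nat.sub_add_cancel (hm i).1).symm⟩
  have hforms : (d : ℤ) * (d + 3) / 2 = ((d + 2).choose 2 : ℕ) - 1 := by
    rw [choose_two_eq_ediv, show ((d + 1 : ℕ) : ℤ) * ((d + 1 : ℕ) + 1) = d * (d + 3) + 2 * 1 by
      push_cast; ring, Int.add_mul_ediv_left _ _ two_ne_zero]
    ring
  have hbound := choose_add_le_finrank_linSys hp (fun i => (hm i).2) fun i => by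
    have hi : d + 2 ≤ (r 0 + 1) + (r i.succ + 1) := h i
    omega
  simp only [virtDim, projDim, hforms, ← choose_two_eq_ediv]
  zify at hbound
  linarith

theorem qh_eq_cons (n m₀ : ℕ) : qh n m₀ = Fin.cons m₀ fun _ => 6 := by
  ext i
  cases i using Fin.cases <;> simp [qh]

theorem virtDim_qh {d : ℕ} (hd : 4 ≤ d) (n : ℕ) :
    virtDim d (qh n (d - 4)) = 5 * (d : ℤ) - 21 * n - 6 := by
  obtain ⟨e, rfl⟩ := Nat.exists_eq_add_of_le' hd
  have hsplit : ((e + 4 : ℕ) : ℤ) * ((e + 4 : ℕ) + 3) = e * (e + 1) + 2 * (5 * e + 14) := by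
    push_cast
    ring
  simp only [virtDim, qh_eq_cons, Fin.sum_univ_succ, Fin.cons_zero, Fin.cons_succ,
    Nat.add_sub_cancel, Finset.sum_const, Finset.card_univ, Fintype.card_fin, hsplit,
    Int.add_mul_ediv_left _ _ (two_ne_zero : (2 : ℤ) ≠ 0), nsmul_eq_mul]
  push_cast
  norm_num
  ring

end LowerBound

section Semicontinuity

theorem rank_add_finrank_inf_ker {K V ι J : Type*} [Field K] [AddCommGroup V] [Module K V]
    [Fintype ι] {U : Submodule K V} (b : Module.Basis ι K U) (f : V →ₗ[K] J → K) :
    (Matrix.of fun j i => f (b i) j).rank +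
      Module.finrank K (U ⊓ LinearMap.ker f : Submodule K V) = Fintype.card ι := by
  have := Module.Finite.of_basis b
  have hmulVec : (Matrix.of fun j i => f (b i) j).mulVecLin =
      f.domRestrict U ∘ₗ b.equivFun.symm.toLinearMap := by
    ext i j
    simp [Matrix.mulVec, dotProduct, mul_comm]
  have hker : (LinearMap.ker (f.domRestrict U)).map U.subtype = U ⊓ LinearMap.ker f := by
    rw [LinearMap.ker_domRestrict, Submodule.map_comap_subtype]
  rw [Matrix.rank, hmulVec, LinearMap.range_comp_of_range_eq_top _ b.equivFun.symm.range, ← hker,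
    Submodule.finrank_map_subtype_eq, LinearMap.finrank_range_add_finrank_ker,
    Module.finrank_eq_card_basis b]

theorem Generically.mono {k : ℕ} {Q Q' : (Fin k → Fin 3 → ℂ) → Prop} (h : Generically k Q)
    (hQ : ∀ p, (∀ i, p i ≠ 0) → Q p → Q' p) : Generically k Q' := by
  obtain ⟨P, hP₀, hP⟩ := h
  exact ⟨P, hP₀, fun p hp hne => hQ p hp (hP p hp hne)⟩

theorem generically_of_forall {k : ℕ} {Q : (Fin k → Fin 3 → ℂ) → Prop} (h : ∀ p, Q p) :
    Generically k Q :=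
  ⟨1, one_ne_zero, fun p _ _ => h p⟩

theorem generically_projDim_le {k : ℕ} (p₀ : Fin k → Fin 3 → ℂ) (d : ℕ) (m : Fin k → ℕ) :
    Generically k fun p => projDim p d m ≤ projDim p₀ d m := by
  let J := Σ i : Fin k, {ν : Fin 3 → Fin (m i) // (ν 0 + ν 1 + ν 2 : ℕ) < m i}
  let b := Module.finBasis ℂ (homogeneousSubmodule (Fin 3) ℂ d)
  let f (p : Fin k → Fin 3 → ℂ) : MvPolynomial (Fin 3) ℂ →ₗ[ℂ] J → ℂ :=
    LinearMap.pi fun j => (aeval (p j.1)).toLinearMap ∘ₗ mderiv fun l => j.2.1 l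
  have hf (p : Fin k → Fin 3 → ℂ) :
      linSys p d m = homogeneousSubmodule (Fin 3) ℂ d ⊓ LinearMap.ker (f p) := by
    refine congrArg (_ ⊓ ·) (Submodule.ext fun F => ?_)
    simp only [Submodule.mem_iInf, LinearMap.mem_ker, funext_iff]
    refine ⟨fun h j => h j.1 _ j.2.2, fun h i ν hν => ?_⟩
    have hl (l : Fin 3) : ν l < m i := by fin_cases l <;> simp <;> omega
    exact h ⟨i, fun l => ⟨ν l, hl l⟩, hν⟩
  let M : Matrix J (Fin _) (MvPolynomial (Fin k × Fin 3) ℂ) :=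
    Matrix.of fun j a => rename (Prod.mk j.1) (mderiv (fun l => j.2.1 l) (b a))
  have hM (p : Fin k → Fin 3 → ℂ) :
      M.map (eval fun x => p x.1 x.2) = Matrix.of fun j a => f p (b a) j := by
    ext j a
    exact eval_rename _ _ _
  obtain ⟨P, hP₀, hP⟩ := exists_eval_ne_zero_forall_rank_le M fun x => p₀ x.1 x.2
  refine ⟨P, fun h => hP₀ (by rw [h, map_zero]), fun p _ hp => ?_⟩
  have hrank := hP _ hp
  rw [hM, hM] at hrank
  have h₀ := rank_add_finrank_inf_ker b (f p₀)
  have h₁ := rank_add_finrank_inf_ker b (f p)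
  change (_ : ℤ) - 1 ≤ _ - 1
  rw [hf, hf]
  omega

end Semicontinuity

section Homogenize

variable {R A : Type*} [CommSemiring R] [CommSemiring A] [Algebra R A]

theorem homogenize_add_left {p : R[X]} {N : ℕ} (hp : p.natDegree ≤ N) (e : ℕ) :
    p.homogenize (N + e) = p.homogenize N * X 1 ^ e := by
  simpa using Polynomial.homogenize_mul p 1 hp (Polynomial.natDegree_one.trans_le e.zero_le)

theorem aeval_homogenize (z w : A) (p : R[X]) (N : ℕ) :
    aeval ![z, w] (p.homogenize N) =
      ∑ j ∈ Finset.range (N + 1), p.coeff j • (z ^ j * w ^ (N - j)) := by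
  rw [Polynomial.homogenize, map_sum, Finset.Nat.sum_antidiagonal_eq_sum_range_succ_mk]
  refine Finset.sum_congr rfl fun j _ => ?_
  simp [aeval_monomial, Finsupp.prod_fintype, Fin.prod_univ_two, Algebra.smul_def]

theorem eq_zero_of_aeval_homogenize_eq_zero [NoZeroDivisors R] [NoZeroDivisors A]
    (φ : A →ₐ[R] R) {z w : A} (hz : z ≠ 0) (hφz : φ z = 0) (hφw : φ w ≠ 0) {p : R[X]} {N : ℕ}
    (hp : p.natDegree ≤ N) (h : aeval ![z, w] (p.homogenize N) = 0) : p = 0 := by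
  have hcoeff {q : R[X]} {M : ℕ} (hq : aeval ![z, w] (q.homogenize M) = 0) : q.coeff 0 = 0 := by
    have heval := congrArg φ hq
    rw [aeval_homogenize, Finset.sum_range_succ'] at heval
    simpa [hφz, pow_ne_zero M hφw] using heval
  induction N generalizing p with
  | zero => rw [Polynomial.eq_C_of_natDegree_le_zero hp, hcoeff h, Polynomial.C_0]
  | succ N ih =>
    have hdivX : p.divX * Polynomial.X = p := by simpa [hcoeff h] using p.divX_mul_X_add
    have hdeg : p.divX.natDegree ≤ N := by
      rw [Polynomial.natDegree_divX_eq_natDegree_tsub_one]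
      omega
    rw [← hdivX, Polynomial.homogenize_mul _ _ hdeg Polynomial.natDegree_X_le, map_mul] at h
    have hzero := (mul_eq_zero.mp h).resolve_right (by simpa using hz)
    rw [← hdivX, ih hdeg hzero, zero_mul]

end Homogenize

section Dehomogenize

variable {K : Type*} [CommSemiring K]

/-- The dehomogenization `F(1, Y, T)` of a form `F`, as a polynomial in `T` over `K[Y]`. -/
noncomputable def dehomogenize : MvPolynomial (Fin 3) K →ₐ[K] K[X][X] :=
  aeval ![1, Polynomial.C Polynomial.X, Polynomial.X]

theorem dehomogenize_eq_sum (F : MvPolynomial (Fin 3) K) :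
    dehomogenize F = ∑ ν ∈ F.support,
      Polynomial.monomial (ν 2) (Polynomial.monomial (ν 1) (coeff ν F)) := by
  rw [dehomogenize, aeval_def, eval₂_eq']
  refine Finset.sum_congr rfl fun ν _ => ?_
  simp [Fin.prod_univ_three, ← Polynomial.C_mul_X_pow_eq_monomial, mul_assoc,
    IsScalarTower.algebraMap_apply K K[X] K[X][X]]

theorem coeff_coeff_dehomogenize {F : MvPolynomial (Fin 3) K} {d : ℕ} (hF : F.IsHomogeneous d)
    {ν : Fin 3 →₀ ℕ} (hν : ν.degree = d) :
    ((dehomogenize F).coeff (ν 2)).coeff (ν 1) = coeff ν F := by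
  simp only [dehomogenize_eq_sum, Polynomial.finsetSum_coeff, Polynomial.coeff_monomial]
  rw [Finset.sum_eq_single ν]
  · simp
  · intro μ hμ hne
    have hμdeg : μ.degree = d := not_imp_comm.mp hF.coeff_eq_zero (mem_support_iff.mp hμ)
    rw [← hν, Finsupp.degree_eq_sum, Finsupp.degree_eq_sum, Fin.sum_univ_three,
      Fin.sum_univ_three] at hμdeg
    split_ifs with h2
    · rw [Polynomial.coeff_monomial, if_neg]
      intro h1
      refine hne (Finsupp.ext fun i => ?_)
      fin_cases i <;> simp <;> omega
    · rfl
  · intro h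
    simp [notMem_support_iff.mp h]

theorem eq_zero_of_dehomogenize_eq_zero {F : MvPolynomial (Fin 3) K} {d : ℕ}
    (hF : F.IsHomogeneous d) (h : dehomogenize F = 0) : F = 0 := by
  ext ν
  by_cases hν : ν.degree = d
  · simp [← coeff_coeff_dehomogenize hF hν, h]
  · exact hF.coeff_eq_zero hν

theorem natDegree_coeff_dehomogenize_le {F : MvPolynomial (Fin 3) K} {d : ℕ}
    (hF : F.IsHomogeneous d) (j : ℕ) : ((dehomogenize F).coeff j).natDegree ≤ d - j := by
  rw [dehomogenize_eq_sum, Polynomial.finsetSum_coeff]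
  refine Polynomial.natDegree_sum_le_of_forall_le _ _ fun ν hν => ?_
  have hdeg : ν.degree = d := not_imp_comm.mp hF.coeff_eq_zero (mem_support_iff.mp hν)
  rw [Finsupp.degree_eq_sum, Fin.sum_univ_three] at hdeg
  rw [Polynomial.coeff_monomial]
  split_ifs
  · exact (Polynomial.natDegree_monomial_le _).trans (by omega)
  · simp

theorem VanishesToOrder.natDegree_dehomogenize_le {K : Type*} [Field K] [CharZero K]
    {F : MvPolynomial (Fin 3) K} {d m : ℕ} (h : VanishesToOrder F m ![0, 0, 1])
    (hF : F.IsHomogeneous d) :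
    (dehomogenize F).natDegree ≤ d - m := by
  have hline : (![1, Polynomial.C Polynomial.X, Polynomial.X] : Fin 3 → K[X][X]) = fun i =>
      Polynomial.X * Polynomial.C (algebraMap K K[X] (![0, 0, 1] i)) +
        Polynomial.C ((![1, Polynomial.X, 0] : Fin 3 → K[X]) i) := by
    ext1 i
    fin_cases i <;> simp
  rw [dehomogenize, hline]
  exact h.natDegree_aeval_line_le hF _

theorem homogenize_dehomogenize {F : MvPolynomial (Fin 3) K} {d : ℕ} (hF : F.IsHomogeneous d) :
    (dehomogenize F).homogenize d = aeval ![X 1, (Polynomial.X : K[X]) • X 1, X 0] F := by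
  refine Polynomial.homogenize_eq_of_isHomogeneous ?_ ?_
  · refine one_mul d ▸ hF.aeval _ fun i => ?_
    fin_cases i
    · exact isHomogeneous_X _ 1
    · simpa [smul_eq_C_mul] using (isHomogeneous_X K[X] (1 : Fin 2)).C_mul Polynomial.X
    · exact isHomogeneous_X _ 0
  · have h : ((aeval ![Polynomial.X, 1]).restrictScalars K).comp
        (aeval ![X 1, (Polynomial.X : K[X]) • X 1, (X 0 : MvPolynomial (Fin 2) K[X])]) =
          dehomogenize := by
      ext i
      fin_cases i <;> simp [dehomogenize, Polynomial.smul_eq_C_mul]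
    exact DFunLike.congr_fun h F

theorem aeval_eq_pow_mul_aeval_homogenize {A : Type*} [CommSemiring A] [Algebra K A]
    [Algebra K[X] A] [IsScalarTower K K[X] A] {F : MvPolynomial (Fin 3) K} {d N : ℕ}
    (hF : F.IsHomogeneous d) (hFN : (dehomogenize F).natDegree ≤ N) (hN : N ≤ d) (z w : A) :
    aeval ![w, (Polynomial.X : K[X]) • w, z] F =
      aeval ![z, w] ((dehomogenize F).homogenize N) * w ^ (d - N) := by
  have hcomp : ((aeval ![z, w]).restrictScalars K).comp
      (aeval ![X 1, (Polynomial.X : K[X]) • X 1, (X 0 : MvPolynomial (Fin 2) K[X])]) =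
        aeval ![w, (Polynomial.X : K[X]) • w, z] := by
    ext i
    fin_cases i <;> simp
  calc aeval ![w, (Polynomial.X : K[X]) • w, z] F
    _ = aeval ![z, w] ((dehomogenize F).homogenize d) := by
      rw [homogenize_dehomogenize hF, ← hcomp]
      rfl
    _ = _ := by
      rw [← Nat.add_sub_cancel' hN, homogenize_add_left hFN, map_mul, Nat.add_sub_cancel_left]
      simp

end Dehomogenize

section Slope

variable {R : Type*} [CommSemiring R] {s e e' : ℕ} {g h : R[X][X]}

/-- The polynomials in `T` over `R[Y]` whose coefficient of `T ^ l` has degree at most `e + l s`,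
i.e. whose Newton polygon lies below a line of slope `s`. -/
def SlopeLE (s e : ℕ) (h : R[X][X]) : Prop :=
  ∀ l, (h.coeff l).natDegree ≤ e + l * s

theorem SlopeLE.mul (hg : SlopeLE s e g) (hh : SlopeLE s e' h) : SlopeLE s (e + e') (g * h) := by
  intro l
  rw [Polynomial.coeff_mul]
  refine Polynomial.natDegree_sum_le_of_forall_le _ _ fun x hx => ?_
  rw [← Finset.HasAntidiagonal.mem_antidiagonal.mp hx, add_mul]
  have hx₁ := hg x.1
  have hx₂ := hh x.2
  exact Polynomial.natDegree_mul_le.trans (by omega)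

theorem slopeLE_C {c : R[X]} (hc : c.natDegree ≤ e) : SlopeLE s e (Polynomial.C c) := by
  intro l
  rw [Polynomial.coeff_C]
  split_ifs
  · omega
  · simp

theorem SlopeLE.pow (hg : SlopeLE s e g) (j : ℕ) : SlopeLE s (j * e) (g ^ j) := by
  induction j with
  | zero => simpa using slopeLE_C (R := R) (s := s) (c := 1) (e := 0) (by simp)
  | succ j ih => rw [pow_succ, add_mul, one_mul]; exact ih.mul hg

theorem slopeLE_sum {ι : Type*} {t : Finset ι} {f : ι → R[X][X]} (hf : ∀ i ∈ t, SlopeLE s e (f i)) :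
    SlopeLE s e (∑ i ∈ t, f i) := by
  intro l
  rw [Polynomial.finsetSum_coeff]
  exact Polynomial.natDegree_sum_le_of_forall_le _ _ fun i hi => hf i hi l

end Slope

section DimensionCount

variable {K V : Type*} [Field K] [AddCommGroup V] [Module K V]

/-- The multiples of `f` of degree at most `D`. -/
noncomputable def multiplesDegreeLE (f : K[X]) (D : ℕ) : Submodule K K[X] :=
  (Polynomial.degreeLT K (D + 1 - f.natDegree)).map (LinearMap.mulLeft K f)

theorem mem_multiplesDegreeLE {f g : K[X]} {D : ℕ} (hfg : f ∣ g) (hg : g.natDegree ≤ D) :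
    g ∈ multiplesDegreeLE f D := by
  obtain ⟨q, rfl⟩ := hfg
  rcases eq_or_ne (f * q) 0 with hfq | hfq
  · exact hfq ▸ zero_mem _
  · obtain ⟨hf, hq⟩ := mul_ne_zero_iff.mp hfq
    refine ⟨q, ?_, rfl⟩
    rw [Polynomial.natDegree_mul hf hq] at hg
    rw [SetLike.mem_coe, Polynomial.mem_degreeLT, ← Polynomial.natDegree_lt_iff_degree_lt hq]
    omega

instance finite_multiplesDegreeLE (f : K[X]) (D : ℕ) : Module.Finite K (multiplesDegreeLE f D) :=
  Module.Finite.map _ _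

theorem finrank_multiplesDegreeLE_le (f : K[X]) (D : ℕ) :
    Module.finrank K (multiplesDegreeLE f D) ≤ D + 1 - f.natDegree := by
  refine (Submodule.finrank_map_le _ _).trans_eq ?_
  rw [(Polynomial.degreeLTEquiv K _).finrank_eq, Module.finrank_fin_fun]

theorem finrank_le_sum_of_slopeLE_of_C_dvd [Module.Finite K V] {Φ : V →ₗ[K] K[X][X]}
    (hΦ : Function.Injective Φ) {N s e : ℕ} (hN : ∀ v, (Φ v).natDegree ≤ N)
    (hs : ∀ v, SlopeLE s e (Φ v)) {f : K[X]} (hf : ∀ v, Polynomial.C f ∣ Φ v) :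
    Module.finrank K V ≤ ∑ l ∈ Finset.range (N + 1), (e + l * s + 1 - f.natDegree) := by
  let ψ (l : Fin (N + 1)) : V →ₗ[K] K[X] :=
    (Polynomial.lcoeff K[X] (l : ℕ)).restrictScalars K ∘ₗ Φ
  have hmem (l : Fin (N + 1)) (v : V) : ψ l v ∈ multiplesDegreeLE f (e + l * s) :=
    mem_multiplesDegreeLE ((Polynomial.C_dvd_iff_dvd_coeff _ _).mp (hf v) l) (hs v l)
  have hker : ⨅ l, LinearMap.ker (ψ l) = ⊥ := by
    refine (Submodule.eq_bot_iff _).mpr fun v hv => hΦ ?_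
    ext1 l
    rw [map_zero, Polynomial.coeff_zero]
    rcases Nat.lt_or_ge l (N + 1) with hl | hl
    · exact (Submodule.mem_iInf _).mp hv ⟨l, hl⟩
    · exact Polynomial.coeff_eq_zero_of_natDegree_lt ((hN v).trans_lt hl)
  have hrank := finrank_le_finrank_iInf_ker_add_sum ψ _ hmem
  rw [hker, finrank_bot, zero_add] at hrank
  exact hrank.trans <| (Finset.sum_le_sum fun l _ => finrank_multiplesDegreeLE_le _ _).trans_eq <|
    Fin.sum_univ_eq_sum_range (fun l => e + l * s + 1 - f.natDegree) _

end DimensionCount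

section Divisibility

theorem C_X_sub_C_dvd_iff_map_eq_zero {R : Type*} [CommRing R] {α : R} {q : R[X][X]} :
    Polynomial.C (Polynomial.X - Polynomial.C α) ∣ q ↔ q.map (Polynomial.evalRingHom α) = 0 := by
  simp only [Polynomial.C_dvd_iff_dvd_coeff, Polynomial.dvd_iff_isRoot, Polynomial.ext_iff,
    Polynomial.IsRoot.def, Polynomial.coeff_map, Polynomial.coe_evalRingHom, Polynomial.coeff_zero]

theorem X_pow_sub_one_pow_dvd {K : Type*} [Field K] {n m : ℕ} [NeZero n] {ζ : K}
    (hζ : IsPrimitiveRoot ζ n) {f : K[X]}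
    (h : ∀ i < n, (Polynomial.X - Polynomial.C (ζ ^ i)) ^ m ∣ f) :
    (Polynomial.X ^ n - 1) ^ m ∣ f := by
  rw [Polynomial.X_pow_sub_one_eq_prod (NeZero.pos n) hζ, ← Finset.prod_pow]
  refine Finset.prod_dvd_of_coprime ?_ fun α hα => ?_
  · intro x _ y _ hxy
    exact (Polynomial.pairwise_coprime_X_sub_C Function.injective_id hxy).pow
  · obtain ⟨i, hi, rfl⟩ :=
      hζ.eq_pow_of_pow_eq_one ((Polynomial.mem_nthRootsFinset (NeZero.pos n) _).mp hα)
    exact h i hi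

end Divisibility

section Pencil

variable {K : Type*}

/-- The numerator `T - Y ^ k` of the inverse of the Möbius transformation
`T = (Z + Y ^ k) / (1 + Y ^ a Z)`, by which the lines through `(0 : 0 : 1)` are reparametrized. -/
noncomputable def mobiusNum (K : Type*) [CommRing K] (k : ℕ) : K[X][X] :=
  Polynomial.X - Polynomial.C (Polynomial.X ^ k)

/-- The denominator `1 - Y ^ a T` of the inverse of the Möbius transformation
`T = (Z + Y ^ k) / (1 + Y ^ a Z)`. -/
noncomputable def mobiusDen (K : Type*) [CommRing K] (a : ℕ) : K[X][X] :=
  1 - Polynomial.C (Polynomial.X ^ a) * Polynomial.X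

/-- The form `w ^ N F(1, Y, z / w)` for `z = mobiusNum K k` and `w = mobiusDen K a`, where `F` is
of degree at most `N` in the last variable. -/
noncomputable def mobiusTransform [CommRing K] (a k N : ℕ) :
    MvPolynomial (Fin 3) K →ₗ[K] K[X][X] :=
  (aeval ![mobiusNum K k, mobiusDen K a]).toLinearMap.restrictScalars K ∘ₗ
    (Polynomial.homogenizeLM N).restrictScalars K ∘ₗ dehomogenize.toLinearMap

section CommRing

variable [CommRing K] {a k d N : ℕ} {F : MvPolynomial (Fin 3) K}

theorem mobiusTransform_apply :
    mobiusTransform a k N F =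
      aeval ![mobiusNum K k, mobiusDen K a] ((dehomogenize F).homogenize N) :=
  rfl

theorem natDegree_mobiusNum_le : (mobiusNum K k).natDegree ≤ 1 :=
  Polynomial.natDegree_X_sub_C_le _

theorem natDegree_mobiusDen_le : (mobiusDen K a).natDegree ≤ 1 := by
  unfold mobiusDen
  compute_degree

theorem slopeLE_mobiusNum {s : ℕ} : SlopeLE s k (mobiusNum K k) := by
  intro l
  rw [mobiusNum, Polynomial.coeff_sub, Polynomial.coeff_X, Polynomial.coeff_C]
  refine (Polynomial.natDegree_sub_le _ _).trans (max_le ?_ ?_)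
  · split_ifs <;> simp
  · split_ifs
    · exact (Polynomial.natDegree_X_pow_le k).trans (Nat.le_add_right _ _)
    · simp

theorem slopeLE_mobiusDen {s e : ℕ} (ha : a ≤ e + s) : SlopeLE s e (mobiusDen K a) := by
  intro l
  rw [mobiusDen, Polynomial.coeff_sub, Polynomial.coeff_one, Polynomial.coeff_C_mul,
    Polynomial.coeff_X]
  refine (Polynomial.natDegree_sub_le _ _).trans (max_le ?_ ?_)
  · split_ifs <;> simp
  · split_ifs with h
    · rw [← h, mul_one, one_mul]
      exact (Polynomial.natDegree_X_pow_le a).trans ha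
    · simp

theorem natDegree_mobiusTransform_le : (mobiusTransform a k N F).natDegree ≤ N := by
  have hcoord : ∀ i, (![mobiusNum K k, mobiusDen K a] i).natDegree ≤ 1 :=
    Fin.forall_fin_two.mpr ⟨natDegree_mobiusNum_le, natDegree_mobiusDen_le⟩
  rw [mobiusTransform_apply]
  exact (aeval_natDegree_le _ (Polynomial.isHomogeneous_homogenize _).totalDegree_le _
    hcoord).trans_eq (mul_one N)

theorem slopeLE_mobiusTransform {s : ℕ} (hF : F.IsHomogeneous d) (hN : N ≤ d) (hk : 1 ≤ k)
    (ha : a ≤ k - 1 + s) : SlopeLE s (d + N * (k - 1)) (mobiusTransform a k N F) := by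
  rw [mobiusTransform_apply, aeval_homogenize]
  refine slopeLE_sum fun j hj => ?_
  have hjN : j ≤ N := Finset.mem_range_succ_iff.mp hj
  rw [Polynomial.smul_eq_C_mul]
  convert (slopeLE_C (natDegree_coeff_dehomogenize_le hF j)).mul
    ((slopeLE_mobiusNum.pow j).mul ((slopeLE_mobiusDen ha).pow (N - j))) using 1
  obtain ⟨k, rfl⟩ := Nat.exists_eq_add_of_le' hk
  obtain ⟨i, rfl⟩ := Nat.exists_eq_add_of_le hjN
  obtain ⟨e, rfl⟩ := Nat.exists_eq_add_of_le hN
  rw [Nat.add_sub_cancel, Nat.add_sub_cancel_left, show j + i + e - j = i + e by omega]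
  ring

theorem C_X_sub_C_dvd_mobius_sub {α : K} (hα : α ^ (a + k) = 1) (i : Fin 3) :
    Polynomial.C (Polynomial.X - Polynomial.C α) ∣
      ![mobiusDen K a, (Polynomial.X : K[X]) • mobiusDen K a, mobiusNum K k] i -
        mobiusDen K a * algebraMap K K[X][X] (![1, α, -α ^ k] i) := by
  rw [C_X_sub_C_dvd_iff_map_eq_zero]
  fin_cases i
  · simp
  · simp [Polynomial.smul_eq_C_mul, mul_comm]
  · have hpow : Polynomial.C α ^ a * Polynomial.C α ^ k = 1 := by
      rw [← pow_add, ← Polynomial.C_pow, hα, Polynomial.C_1]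
    suffices Polynomial.X - Polynomial.C α ^ k +
        (1 - Polynomial.C α ^ a * Polynomial.X) * Polynomial.C α ^ k = 0 by
      simpa [mobiusNum, mobiusDen]
    linear_combination -Polynomial.X * hpow

theorem not_C_X_sub_C_dvd_mobiusDen [Nontrivial K] (α : K) :
    ¬ Polynomial.C (Polynomial.X - Polynomial.C α) ∣ mobiusDen K a := by
  rw [C_X_sub_C_dvd_iff_map_eq_zero]
  intro h
  simpa [mobiusDen] using congrArg (Polynomial.eval 0) h

end CommRing

theorem eq_zero_of_mobiusTransform_eq_zero [CommRing K] [IsDomain K] {a k d N : ℕ}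
    {F : MvPolynomial (Fin 3) K} (hak : a + k ≠ 0) (hF : F.IsHomogeneous d)
    (hFN : (dehomogenize F).natDegree ≤ N) (h : mobiusTransform a k N F = 0) : F = 0 := by
  refine eq_zero_of_dehomogenize_eq_zero hF <| eq_zero_of_aeval_homogenize_eq_zero
    (Polynomial.aeval (Polynomial.X ^ k)) (Polynomial.X_sub_C_ne_zero _) ?_ ?_ hFN h
  · simp [mobiusNum]
  · intro hden
    simpa [mobiusDen, zero_pow hak, ← pow_add] using congrArg (Polynomial.eval 0) hden

section Field

variable [Field K] {a k d N m : ℕ} {F : MvPolynomial (Fin 3) K} {α : K}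

theorem pow_dvd_mobiusTransform [CharZero K] (hF : F.IsHomogeneous d)
    (hFN : (dehomogenize F).natDegree ≤ N) (hN : N ≤ d) (hα : α ^ (a + k) = 1)
    (hm : VanishesToOrder F m ![1, α, -α ^ k]) :
    Polynomial.C (Polynomial.X - Polynomial.C α) ^ m ∣ mobiusTransform a k N F := by
  have hmem := hm.aeval_mem_pow hF (I := Ideal.span {Polynomial.C (Polynomial.X - Polynomial.C α)})
    fun i => Ideal.mem_span_singleton.mpr (C_X_sub_C_dvd_mobius_sub hα i)
  rw [aeval_eq_pow_mul_aeval_homogenize hF hFN hN, Ideal.span_singleton_pow,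
    Ideal.mem_span_singleton] at hmem
  have hprime : Prime (Polynomial.C (Polynomial.X - Polynomial.C α)) :=
    Polynomial.prime_C_iff.mpr (Polynomial.prime_X_sub_C α)
  exact hprime.pow_dvd_of_dvd_mul_right _
    (fun h => not_C_X_sub_C_dvd_mobiusDen α (hprime.dvd_of_dvd_pow h)) hmem

theorem C_X_pow_sub_one_pow_dvd_mobiusTransform [CharZero K] {ζ : K}
    (hak : a + k ≠ 0) (hζ : IsPrimitiveRoot ζ (a + k)) (hF : F.IsHomogeneous d)
    (hFN : (dehomogenize F).natDegree ≤ N) (hN : N ≤ d)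
    (hm : ∀ i < a + k, VanishesToOrder F m ![1, ζ ^ i, -(ζ ^ i) ^ k]) :
    Polynomial.C ((Polynomial.X ^ (a + k) - 1) ^ m) ∣ mobiusTransform a k N F := by
  have : NeZero (a + k) := ⟨hak⟩
  refine (Polynomial.C_dvd_iff_dvd_coeff _ _).mpr fun l =>
    X_pow_sub_one_pow_dvd hζ fun i hi => ?_
  refine (Polynomial.C_dvd_iff_dvd_coeff _ _).mp ?_ l
  rw [Polynomial.C_pow]
  refine pow_dvd_mobiusTransform hF hFN hN ?_ (hm i hi)
  rw [pow_right_comm, hζ.pow_eq_one, one_pow]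

end Field

end Pencil

section UpperBound

/-- The configuration of the point `(0 : 0 : 1)` and the points `(1 : α : -α ^ k)` with
`α` running through the powers of `ζ`. -/
noncomputable def rootConfig (n k : ℕ) (ζ : ℂ) : Fin (n + 1) → Fin 3 → ℂ :=
  Fin.cons ![0, 0, 1] fun i : Fin n => ![1, ζ ^ (i : ℕ), -(ζ ^ (i : ℕ)) ^ k]

theorem mem_linSys_rootConfig {n k d m₀ m : ℕ} {ζ : ℂ} {F : MvPolynomial (Fin 3) ℂ} :
    F ∈ linSys (rootConfig n k ζ) d (Fin.cons m₀ fun _ => m) ↔ F.IsHomogeneous d ∧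
      VanishesToOrder F m₀ ![0, 0, 1] ∧
        ∀ i < n, VanishesToOrder F m ![1, ζ ^ i, -(ζ ^ i) ^ k] := by
  simp [mem_linSys, Fin.forall_fin_succ, rootConfig, Fin.forall_iff]

theorem finrank_linSys_rootConfig_le {a k d N s : ℕ} {ζ : ℂ} (hN : N ≤ d) (hk : 1 ≤ k)
    (ha : a ≤ k - 1 + s) (hζ : IsPrimitiveRoot ζ (a + k)) (m : ℕ) :
    Module.finrank ℂ (linSys (rootConfig (a + k) k ζ) d (Fin.cons (d - N) fun _ => m)) ≤
      ∑ l ∈ Finset.range (N + 1), (d + N * (k - 1) + l * s + 1 - m * (a + k)) := by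
  have hak : a + k ≠ 0 := by omega
  set U := linSys (rootConfig (a + k) k ζ) d (Fin.cons (d - N) fun _ => m)
  have hfinite : Module.Finite ℂ U := Submodule.finiteDimensional_of_le inf_le_left
  have hhom (F : U) : F.1.IsHomogeneous d := (mem_linSys_rootConfig.mp F.2).1
  have hdeg (F : U) : (dehomogenize F.1).natDegree ≤ N :=
    ((mem_linSys_rootConfig.mp F.2).2.1.natDegree_dehomogenize_le (hhom F)).trans_eq
      (Nat.sub_sub_self hN)
  have hinjective : Function.Injective ((mobiusTransform a k N).domRestrict U) :=
    (injective_iff_map_eq_zero _).mpr fun F hF =>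
      Subtype.ext (eq_zero_of_mobiusTransform_eq_zero hak (hhom F) (hdeg F) hF)
  have hcount := finrank_le_sum_of_slopeLE_of_C_dvd hinjective
    (fun _ => natDegree_mobiusTransform_le)
    (fun F => slopeLE_mobiusTransform (hhom F) hN hk ha) fun F =>
      C_X_pow_sub_one_pow_dvd_mobiusTransform hak hζ (hhom F) (hdeg F) hN
        (mem_linSys_rootConfig.mp F.2).2.2
  rwa [Polynomial.natDegree_pow, ← Polynomial.C_1, Polynomial.natDegree_X_pow_sub_C] at hcount

theorem exists_config_projDim_le {d n : ℕ} (hn : 1 ≤ n) (hd : 20 * n + 6 ≤ 5 * d)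
    (h : Odd n ∨ d ≠ 4 * n + 2) :
    ∃ p₀ : Fin (n + 1) → Fin 3 → ℂ,
      projDim p₀ d (qh n (d - 4)) ≤ 5 * (d : ℤ) - 20 * n - 6 := by
  obtain ⟨a, k, s, rfl, hk, ha, hsum⟩ : ∃ a k s, n = a + k ∧ 1 ≤ k ∧ a ≤ k - 1 + s ∧
      ∑ l ∈ Finset.range (4 + 1), (d + 4 * (k - 1) + l * s + 1 - 6 * n) + 20 * n + 5 ≤ 5 * d := by
    simp only [Finset.sum_range_succ, Finset.sum_range_zero]
    rcases Nat.even_or_odd' n with ⟨c, hc | hc⟩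
    · have hne : d ≠ 4 * n + 2 := h.resolve_left (by simp [hc])
      exact ⟨c, c, 1, by omega⟩
    · exact ⟨c, c + 1, 0, by omega⟩
  refine ⟨rootConfig (a + k) k (Complex.exp (2 * Real.pi * Complex.I / (a + k : ℕ))), ?_⟩
  have hbound := finrank_linSys_rootConfig_le (N := 4) (d := d) (by omega) hk ha
    (Complex.isPrimitiveRoot_exp (a + k) (by omega)) 6
  rw [projDim, qh_eq_cons]
  omega

end UpperBound

theorem special_L_d_dsub4_sixn (d n : ℕ) (hn : 1 ≤ n) (hd : 20 * n + 6 ≤ 5 * d) :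
    virtDim d (qh n (d - 4)) = 5 * (d : ℤ) - 21 * n - 6 ∧
    Generically (n + 1) (fun p =>
      projDim p d (qh n (d - 4)) ≥ 5 * (d : ℤ) - 20 * n - 6 ∧
      ((Odd n ∨ d ≠ 4 * n + 2) →
        projDim p d (qh n (d - 4)) = 5 * (d : ℤ) - 20 * n - 6) ∧
      projDim p d (qh n (d - 4)) > max (-1) (virtDim d (qh n (d - 4)))) := by
  have hvirt : virtDim d (qh n (d - 4)) = 5 * (d : ℤ) - 21 * n - 6 := virtDim_qh (by omega) n
  have hupper : Generically (n + 1) fun p => (Odd n ∨ d ≠ 4 * n + 2) →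
      projDim p d (qh n (d - 4)) ≤ 5 * (d : ℤ) - 20 * n - 6 := by
    by_cases h : Odd n ∨ d ≠ 4 * n + 2
    · obtain ⟨p₀, hp₀⟩ := exists_config_projDim_le hn hd h
      exact (generically_projDim_le p₀ d _).mono fun p _ hp _ => hp.trans hp₀
    · exact generically_of_forall fun p hp => absurd hp h
  refine ⟨hvirt, hupper.mono fun p hp hp_upper => ?_⟩
  have hlower : virtDim d (qh n (d - 4)) + n ≤ projDim p d (qh n (d - 4)) := by
    rw [qh_eq_cons]
    refine virtDim_add_le_projDim (hp 0) (Fin.cases ?_ fun i => ?_) fun i => ?_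
    all_goals simp only [Fin.cons_zero, Fin.cons_succ, Set.mem_Icc]
    all_goals omega
  exact ⟨by omega, fun h => le_antisymm (hp_upper h) (by omega), max_lt (by omega) (by omega)⟩
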